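/- arXiv:1304.3032 — 4 statements merged into one kernel-verified Lean document; each statement's English description precedes it below -/
import Mathlib

section
/- There exists a constant c₀ with 0 < c₀ < 1 such that the following holds for every natural number N: if g : ℂ → ℂ is holomorphic on the open unit disk {z : ℂ | ‖z‖ < 1}, satisfies ‖g z‖ < 1 for all z with ‖z‖ < 1, and there is a finite set S ⊆ {z : ℂ | ‖z‖ < 1/2} with cardinality N such that g a = 0 for every a ∈ S, then ‖g z‖ < c₀ ^ N for all z with ‖z‖ < 1/2. -/
open ComplexConjugate in
lemma fs_ident (a w : ℂ) :
    ‖1 - conj a * w‖ ^ 2 = ‖w - a‖ ^ 2 + (1 - ‖a‖ ^ 2) * (1 - ‖w‖ ^ 2) := by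
  simp only [← Complex.normSq_eq_norm_sq, Complex.normSq_apply]
  simp
  ring

open ComplexConjugate in
lemma fs_pick (a z : ℂ) (ha : ‖a‖ < 1/2) (hz : ‖z‖ < 1/2) :
    ‖z - a‖ ≤ 4/5 * ‖1 - conj a * z‖ := by
  have h1 := fs_ident a z
  have h2 : ‖z - a‖ ≤ ‖z‖ + ‖a‖ := norm_sub_le _ _
  have hx := norm_nonneg a
  have hy := norm_nonneg z
  have h0 := norm_nonneg (z - a)
  refine (pow_le_pow_iff_left₀ h0 (by positivity) two_ne_zero).1 ?_
  rw [mul_pow, h1]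
  have h3 : ‖z - a‖ ≤ 1 := by linarith
  have h4 : ‖z - a‖ ^ 2 ≤ 1 := by nlinarith
  have h5 : ‖a‖ ^ 2 ≤ 1/4 := by nlinarith
  have h6 : ‖z‖ ^ 2 ≤ 1/4 := by nlinarith
  nlinarith [mul_nonneg (sub_nonneg.2 h5) (sub_nonneg.2 h6)]

open ComplexConjugate in
lemma fs_bound (a : ℂ) (ha : ‖a‖ < 1/2) (k : ℂ → ℂ)
    (hk : DifferentiableOn ℂ k (Metric.ball 0 1))
    (hb : ∀ w : ℂ, ‖w‖ < 1 → ‖w - a‖ * ‖k w‖ ≤ ‖1 - conj a * w‖) :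
    ∀ z : ℂ, ‖z‖ < 1 → ‖k z‖ ≤ 1 := by
  intro z hz
  have key : ∀ᶠ r : ℝ in nhdsWithin 1 (Set.Iio 1),
      ‖k z‖ ≤ Real.sqrt (1 + (1 - r ^ 2) / (r - 1/2) ^ 2) := by
    have hm : max ‖z‖ (1/2) < 1 := max_lt hz (by norm_num)
    filter_upwards [Ioo_mem_nhdsLT hm] with r hr
    have hzr : ‖z‖ < r := (le_max_left _ _).trans_lt hr.1
    have hr2 : 1/2 < r := (le_max_right _ _).trans_lt hr.1
    have hsub : Metric.closedBall (0:ℂ) r ⊆ Metric.ball 0 1 :=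
      Metric.closedBall_subset_ball hr.2
    have hr0 : r ≠ 0 := by linarith
    refine Complex.norm_le_of_forall_mem_frontier_norm_le (U := Metric.ball (0:ℂ) r)
      Metric.isBounded_ball ?_ ?_ (subset_closure (by simpa using hzr))
    · apply DifferentiableOn.diffContOnCl
      rw [closure_ball _ hr0]
      exact hk.mono hsub
    · intro w hw
      rw [frontier_ball _ hr0] at hw
      have hwr : ‖w‖ = r := by simpa using hw
      have h1 := hb w (by rw [hwr]; exact hr.2)
      have h2 := fs_ident a w
      have h3 : r - 1/2 ≤ ‖w - a‖ := by
        have := norm_sub_norm_le w a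
        linarith
      have h4 : 0 < r - 1/2 := by linarith
      have h5 : 0 ≤ 1 - r ^ 2 := by nlinarith [hr.2]
      apply Real.le_sqrt_of_sq_le
      have h6 : (‖w - a‖ * ‖k w‖) ^ 2 ≤ ‖1 - conj a * w‖ ^ 2 := by gcongr
      rw [h2, hwr, mul_pow] at h6
      have h7 : 0 < ‖w - a‖ ^ 2 := by have : 0 < ‖w - a‖ := by linarith
                                      positivity
      have h8 : (1 - ‖a‖ ^ 2) * (1 - r ^ 2) ≤ 1 - r ^ 2 := by
        nlinarith [mul_nonneg (sq_nonneg ‖a‖) h5]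
      calc ‖k w‖ ^ 2 ≤ 1 + (1 - r ^ 2) / ‖w - a‖ ^ 2 := by
            rw [← sub_le_iff_le_add', le_div_iff₀ h7]
            linarith
        _ ≤ _ := by gcongr
  refine ge_of_tendsto ?_ key
  have hc : ContinuousAt (fun r : ℝ => Real.sqrt (1 + (1 - r ^ 2) / (r - 1/2) ^ 2)) 1 := by
    apply Real.continuous_sqrt.continuousAt.comp
    apply ContinuousAt.add continuousAt_const
    apply ContinuousAt.div (by fun_prop) (by fun_prop)
    norm_num
  have h := hc.tendsto.mono_left (nhdsWithin_le_nhds (s := Set.Iio 1))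
  simpa using h

open ComplexConjugate in
lemma fs_main (S : Finset ℂ) : ∀ g : ℂ → ℂ, DifferentiableOn ℂ g (Metric.ball 0 1) →
    (∀ z : ℂ, ‖z‖ < 1 → ‖g z‖ ≤ 1) → (∀ a ∈ S, ‖a‖ < 1/2) → (∀ a ∈ S, g a = 0) →
    ∀ z : ℂ, ‖z‖ < 1/2 → ‖g z‖ ≤ (4/5 : ℝ) ^ S.card := by
  induction S using Finset.induction_on with
  | empty =>
    intro g _ hb _ _ z hz
    simpa using hb z (by linarith)
  | insert a S haS ih =>
    intro g hg hb hS h0 z hz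
    have ha : ‖a‖ < 1/2 := hS a (by simp)
    have hga : g a = 0 := h0 a (by simp)
    have hfac : ∀ w, (w - a) * dslope g a w = g w := by
      intro w
      have := sub_smul_dslope g a w
      simpa [hga] using this
    set k : ℂ → ℂ := fun w => dslope g a w * (1 - conj a * w) with hkdef
    have hkd : DifferentiableOn ℂ k (Metric.ball 0 1) := by
      have : DifferentiableOn ℂ (dslope g a) (Metric.ball 0 1) := by
        rw [Complex.differentiableOn_dslope]
        · exact hg
        · apply Metric.isOpen_ball.mem_nhds
          simp
          linarith
      exact this.mul (by fun_prop)
    have hkf : ∀ w, (w - a) * k w = g w * (1 - conj a * w) := by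
      intro w
      rw [← hfac w, hkdef]
      ring
    have hk1 := fs_bound a ha k hkd (by
      intro w hw
      rw [← norm_mul, hkf, norm_mul]
      exact mul_le_of_le_one_left (norm_nonneg _) (hb w hw))
    have hk := ih k hkd hk1 (fun b hb => hS b (by simp [hb])) (by
      intro b hbS
      have h1 := hkf b
      rw [h0 b (by simp [hbS]), zero_mul] at h1
      rcases mul_eq_zero.1 h1 with h | h
      · rw [sub_eq_zero] at h
        exact absurd (h ▸ hbS) haS
      · exact h) z hz
    rw [Finset.card_insert_of_notMem haS, pow_succ]
    have hgz : ‖g z‖ * ‖1 - conj a * z‖ = ‖z - a‖ * ‖k z‖ := by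
      rw [← norm_mul, ← norm_mul, hkf]
    have hp := fs_pick a z ha hz
    have hpos : 0 < ‖1 - conj a * z‖ := by
      have h1 := norm_sub_norm_le (1:ℂ) (conj a * z)
      rw [norm_mul, RCLike.norm_conj, norm_one] at h1
      nlinarith [norm_nonneg a, norm_nonneg z]
    refine le_of_mul_le_mul_right ?_ hpos
    rw [hgz]
    calc ‖z - a‖ * ‖k z‖ ≤ (4/5 * ‖1 - conj a * z‖) * (4/5 : ℝ) ^ S.card := by gcongr
      _ = _ := by ring

/-- Fornæss–Sibony Lemma (part 1): there is a universal constant `c₀ ∈ (0,1)` such that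
any holomorphic `g` on the unit disk with `‖g‖ < 1` having `N` zeros in the disk of
radius `1/2` satisfies `‖g‖ < c₀ ^ N` on the disk of radius `1/2`. -/
theorem fornaess_sibony_lemma_part1 :
    ∃ c₀ : ℝ, 0 < c₀ ∧ c₀ < 1 ∧
      ∀ (N : ℕ) (g : ℂ → ℂ),
        (∀ z : ℂ, ‖z‖ < 1 → DifferentiableAt ℂ g z) →
        (∀ z : ℂ, ‖z‖ < 1 → ‖g z‖ < 1) →
        (∃ S : Finset ℂ, (∀ a ∈ S, ‖a‖ < 1/2) ∧ S.card = N ∧ ∀ a ∈ S, g a = 0) →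
        ∀ z : ℂ, ‖z‖ < 1/2 → ‖g z‖ < c₀ ^ N := by
  refine ⟨9/10, by norm_num, by norm_num, ?_⟩
  rintro N g hd hb ⟨S, hS, rfl, h0⟩ z hz
  rcases Nat.eq_zero_or_pos S.card with h | h
  · rw [h, pow_zero]
    exact hb z (by linarith)
  · refine (fs_main S g (fun w hw => (hd w (by simpa using hw)).differentiableWithinAt)
      (fun w hw => (hb w hw).le) hS h0 z hz).trans_lt ?_
    exact pow_lt_pow_left₀ (by norm_num) (by norm_num) h.ne'
end

section
/- Let g : ℂ → ℂ be holomorphic on the open unit disk {z : ℂ | ‖z‖ < 1} with ‖g z‖ < 1 for all z with ‖z‖ < 1. If η is a real number with 0 < η < 1 and ‖g z‖ ≤ η for all z with ‖z‖ < 1/4, then ‖g z‖ ≤ η ^ (1/2 : ℝ) (i.e. ‖g z‖ ≤ Real.sqrt η) for all z with ‖z‖ < 1/2. -/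
/-- Fornæss–Sibony Lemma (part 2): if a holomorphic function bounded by `1` on the unit
disk is bounded by `η < 1` on the disk of radius `1/4`, then it is bounded by `η^{1/2}`
on the disk of radius `1/2`. -/
theorem fornaess_sibony_lemma_part2 (g : ℂ → ℂ)
    (hg : ∀ z : ℂ, ‖z‖ < 1 → DifferentiableAt ℂ g z)
    (hb : ∀ z : ℂ, ‖z‖ < 1 → ‖g z‖ < 1)
    (η : ℝ) (hη0 : 0 < η) (hη1 : η < 1)
    (hsmall : ∀ z : ℂ, ‖z‖ < 1/4 → ‖g z‖ ≤ η) :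
    ∀ z : ℂ, ‖z‖ < 1/2 → ‖g z‖ ≤ Real.sqrt η := by
  intro z hz
  by_cases hz0 : z = 0
  · have h1 := hsmall z (by rw [hz0]; norm_num)
    exact h1.trans (Real.le_sqrt_of_sq_le (by nlinarith))
  have hzp : 0 < ‖z‖ := norm_pos_iff.mpr hz0
  have hl2 : 0 < Real.log 2 := Real.log_pos (by norm_num)
  set L := Real.log ‖z‖ with hL
  have hLu : L + Real.log 2 < 0 := by
    rw [hL, ← Real.log_mul hzp.ne' (by norm_num)]
    exact Real.log_neg (by positivity) (by linarith)
  have hexp : ∀ w : ℂ, w.re ≤ L + Real.log 2 → ‖Complex.exp w‖ < 1 := by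
    intro w hw
    rw [Complex.norm_exp, Real.exp_lt_one_iff]
    linarith
  have hcl : closure (Complex.HadamardThreeLines.verticalStrip (L - Real.log 2) (L + Real.log 2))
      ⊆ {w : ℂ | w.re ≤ L + Real.log 2} := by
    apply closure_minimal
    · intro w hw
      exact (Set.mem_Ioo.mp hw).2.le
    · exact isClosed_le Complex.continuous_re continuous_const
  have key := Complex.HadamardThreeLines.norm_le_interp_of_mem_verticalClosedStrip'
    (f := fun w => g (Complex.exp w)) (z := Complex.log z) (a := η) (b := 1)
    (l := L - Real.log 2) (u := L + Real.log 2) (by linarith)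
    (by
      constructor <;> rw [Complex.log_re] <;> linarith)
    (by
      apply DifferentiableOn.diffContOnCl
      intro w hw
      exact ((hg _ (hexp w (hcl hw))).comp w
        Complex.differentiable_exp.differentiableAt).differentiableWithinAt)
    (by
      refine ⟨1, ?_⟩
      rintro _ ⟨w, hw, rfl⟩
      exact (hb _ (hexp w hw.2)).le)
    (by
      intro w hw
      apply hsmall
      have hw' : w.re = L - Real.log 2 := hw
      rw [Complex.norm_exp, hw', Real.exp_sub, hL, Real.exp_log hzp, Real.exp_log (by norm_num)]
      linarith)
    (by
      intro w hw
      have hw' : w.re = L + Real.log 2 := hw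
      exact (hb _ (hexp w hw'.le)).le)
  have e : (L - (L - Real.log 2)) / (L + Real.log 2 - (L - Real.log 2)) = 1 / 2 := by
    rw [show L - (L - Real.log 2) = Real.log 2 by ring,
      show L + Real.log 2 - (L - Real.log 2) = Real.log 2 * 2 by ring]
    field_simp
  simp only [Complex.exp_log hz0, Complex.log_re, ← hL, e, Real.one_rpow, mul_one] at key
  rw [Real.sqrt_eq_rpow]
  norm_num at key ⊢
  exact key
end

section
/- Let δ > 0 and let f : ℂ → ℂ be holomorphic on the open ball B(0, δ) ⊆ ℂ. Let (εₙ) be a sequence of nonzero complex numbers with εₙ → 0, and suppose that for every n and every z ∈ B(0, δ/2) one has z - εₙ ∈ B(0, δ) and f z ≠ f (z - εₙ). Then the derivative of f has no zero in B(0, δ/2): for every z ∈ B(0, δ/2), deriv f z ≠ 0. -/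
open Metric Filter

/-- Analytic core of Proposition 3.1: if `f` is holomorphic on `B(0, δ)` and there are
nonzero `εₙ → 0` such that `f z ≠ f (z - εₙ)` for all `z ∈ B(0, δ/2)` (with
`z - εₙ ∈ B(0, δ)`), then `deriv f` has no zero on `B(0, δ/2)`. -/
theorem deriv_ne_zero_of_translates_disjoint (δ : ℝ) (hδ : 0 < δ) (f : ℂ → ℂ)
    (hf : ∀ z ∈ Metric.ball (0 : ℂ) δ, DifferentiableAt ℂ f z)
    (ε : ℕ → ℂ) (hε0 : ∀ n, ε n ≠ 0) (hεlim : Tendsto ε atTop (nhds 0))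
    (hmem : ∀ n, ∀ z ∈ Metric.ball (0 : ℂ) (δ / 2), z - ε n ∈ Metric.ball (0 : ℂ) δ)
    (hne : ∀ n, ∀ z ∈ Metric.ball (0 : ℂ) (δ / 2), f z ≠ f (z - ε n)) :
    ∀ z ∈ Metric.ball (0 : ℂ) (δ / 2), deriv f z ≠ 0 := by
  intro z₀ hz₀ h0
  have hO : IsOpen (ball (0 : ℂ) δ) := isOpen_ball
  have hd : DifferentiableOn ℂ f (ball 0 δ) := fun z hz => (hf z hz).differentiableWithinAt
  have hsub : ball (0 : ℂ) (δ / 2) ⊆ ball 0 δ := ball_subset_ball (by linarith)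
  have han : ∀ z ∈ ball (0 : ℂ) δ, AnalyticAt ℂ f z := fun z hz =>
    hd.analyticAt (hO.mem_nhds hz)
  have hnb : ball (0 : ℂ) (δ / 2) ∈ nhds z₀ := isOpen_ball.mem_nhds hz₀
  rcases (han z₀ (hsub hz₀)).deriv.eventually_eq_zero_or_eventually_ne_zero with hz | hnz
  · obtain ⟨r, hr, hball⟩ := Metric.mem_nhds_iff.1 (Filter.inter_mem hz hnb)
    have hconst : ∀ w ∈ ball z₀ r, f w = f z₀ := by
      intro w hw
      refine isOpen_ball.is_const_of_deriv_eq_zero (convex_ball z₀ r).isPreconnected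
        (fun z hz => (hf z (hsub (hball hz).2)).differentiableWithinAt)
        (fun z hz => (hball hz).1) hw (mem_ball_self hr)
    obtain ⟨n, hn⟩ := (hεlim.eventually (ball_mem_nhds (0 : ℂ) hr)).exists
    refine hne n z₀ hz₀ (hconst _ ?_).symm
    simpa [dist_eq_norm] using hn
  · obtain ⟨r, hr, hball⟩ := Metric.nhds_basis_closedBall.mem_iff.1
      (Filter.inter_mem (eventually_nhdsWithin_iff.1 hnz) hnb)
    have hcs : closedBall z₀ r ⊆ ball 0 (δ / 2) := fun z hz => (hball hz).2
    have hsne : ∀ z ∈ sphere z₀ r, deriv f z ≠ 0 := fun z hz =>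
      (hball (sphere_subset_closedBall hz)).1 (ne_of_mem_sphere hz hr.ne')
    obtain ⟨c, hc, hmin⟩ : ∃ c ∈ sphere z₀ r, IsMinOn (fun z => ‖deriv f z‖) (sphere z₀ r) c := by
      refine (isCompact_sphere z₀ r).exists_isMinOn (NormedSpace.sphere_nonempty.2 hr.le) ?_
      intro z hz
      exact (han z (hsub (hcs (sphere_subset_closedBall hz)))).deriv.continuousAt.norm.continuousWithinAt
    set m := ‖deriv f c‖ with hm
    have hm0 : 0 < m := norm_pos_iff.2 (hsne c hc)
    have hunif : TendstoUniformlyOn (fun n z => (f z - f (z - ε n)) / ε n) (deriv f) atTop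
        (closedBall z₀ r) := by
      rw [← tendstoLocallyUniformlyOn_iff_tendstoUniformlyOn_of_compact
        (isCompact_closedBall z₀ r)]
      rw [Metric.tendstoLocallyUniformlyOn_iff]
      intro e he z hz
      have hzδ := hsub (hcs hz)
      have hs : HasStrictDerivAt f (deriv f z) z := (han z hzδ).hasStrictDerivAt
      have h1 := hs.hasStrictFDerivAt.isLittleO.def (show 0 < e / 3 by linarith)
      have h2 : Tendsto (fun p : ℂ × ℂ => (p.1, p.1 - p.2)) (nhds (z, 0)) (nhds (z, z)) := by
        have : Continuous (fun p : ℂ × ℂ => (p.1, p.1 - p.2)) := by fun_prop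
        simpa using this.tendsto (z, 0)
      have h3 := h2.eventually h1
      rw [nhds_prod_eq] at h3
      obtain ⟨pa, hpa, pb, hpb, hab⟩ := Filter.eventually_prod_iff.1 h3
      have h4 : ∀ᶠ w in nhds z, dist (deriv f w) (deriv f z) < e / 3 :=
        (han z hzδ).deriv.continuousAt.eventually (ball_mem_nhds _ (by linarith))
      refine ⟨_, mem_nhdsWithin_of_mem_nhds (hpa.and h4), ?_⟩
      filter_upwards [hεlim.eventually hpb] with n hn w hw
      have h5 := hab hw.1 hn
      have h6 := hw.2
      have hεn : 0 < ‖ε n‖ := norm_pos_iff.2 (hε0 n)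
      have h7 : ‖(f w - f (w - ε n)) / ε n - deriv f z‖ ≤ e / 3 := by
        have : (f w - f (w - ε n)) / ε n - deriv f z
            = (f w - f (w - ε n) - ε n * deriv f z) / ε n := by
          have := hε0 n
          field_simp
        rw [this, norm_div, div_le_iff₀ hεn]
        simpa [mul_comm] using h5
      rw [← dist_eq_norm] at h7
      have := dist_triangle_right (deriv f w) ((f w - f (w - ε n)) / ε n) (deriv f z)
      linarith
    obtain ⟨n, hn⟩ := ((Metric.tendstoUniformlyOn_iff.1 hunif) (m / 2) (by linarith)).exists
    set g : ℂ → ℂ := fun z => (f z - f (z - ε n)) / ε n with hg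
    have hgne : ∀ z ∈ closedBall z₀ r, g z ≠ 0 := fun z hz =>
      div_ne_zero (sub_ne_zero.2 (hne n z (hcs hz))) (hε0 n)
    have hgd : ∀ z ∈ closedBall z₀ r, DifferentiableAt ℂ g z := by
      intro z hz
      have ha := hf z (hsub (hcs hz))
      have hb : DifferentiableAt ℂ (fun z => f (z - ε n)) z :=
        (hf _ (hmem n z (hcs hz))).comp z (differentiableAt_id.sub_const (ε n))
      exact (ha.sub hb).div_const _
    have hinv : DiffContOnCl ℂ (fun z => (g z)⁻¹) (ball z₀ r) := by
      apply DifferentiableOn.diffContOnCl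
      rw [closure_ball z₀ hr.ne']
      exact fun z hz => ((hgd z hz).inv (hgne z hz)).differentiableWithinAt
    have hz₀r : z₀ ∈ closedBall z₀ r := mem_closedBall_self hr.le
    have hle : ‖(g z₀)⁻¹‖ ≤ (m / 2)⁻¹ := by
      refine Complex.norm_le_of_forall_mem_frontier_norm_le isBounded_ball hinv ?_
        (subset_closure (mem_ball_self hr))
      intro z hz
      rw [frontier_ball z₀ hr.ne'] at hz
      have h1 := hn z (sphere_subset_closedBall hz)
      have h2 : m ≤ ‖deriv f z‖ := hmin hz
      rw [dist_eq_norm] at h1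
      have h3 := norm_sub_norm_le (deriv f z) (g z)
      rw [norm_inv]
      exact inv_anti₀ (by linarith) (by simp only [hg] at h3 ⊢; linarith)
    have hlt := hn z₀ hz₀r
    rw [h0, dist_zero_left] at hlt
    rw [norm_inv, inv_le_inv₀ (norm_pos_iff.2 (hgne z₀ hz₀r)) (by linarith)] at hle
    exact absurd hlt (not_lt.2 hle)
end

section
/- Let Λ be an additive subgroup of ℂ that is discrete and cocompact (a ℤ-lattice of rank 2, so that ℂ/Λ is a one-dimensional complex torus 𝕋¹). Let f : ℂ → ℂ be an entire function and suppose that the induced map ℂ → ℂ⧸Λ sending z to the coset f z + Λ converges to some limit along the cocompact filter on ℂ (i.e. the reduction of f modulo Λ has a limit as ‖z‖ → ∞). Then f is constant. -/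
open Filter

/-- Analytic core of Proposition 4.3: if `Λ ⊆ ℂ` is a discrete cocompact lattice and
`f` is entire with `f mod Λ` converging along the cocompact filter (i.e. as
`‖z‖ → ∞`), then `f` is constant. -/
theorem entire_const_of_reduction_tendsto_cocompact (Λ : AddSubgroup ℂ)
    [DiscreteTopology Λ] [CompactSpace (ℂ ⧸ Λ)]
    (f : ℂ → ℂ) (hf : Differentiable ℂ f)
    (hlim : ∃ L : ℂ ⧸ Λ, Tendsto (fun z : ℂ => ((f z : ℂ ⧸ Λ))) (cocompact ℂ) (nhds L)) :
    ∃ c : ℂ, ∀ z : ℂ, f z = c := by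
  obtain ⟨L, hL⟩ := hlim
  obtain ⟨l, rfl⟩ := QuotientAddGroup.mk_surjective L
  -- separation constant of the lattice
  obtain ⟨ε, hε, hsep⟩ := Metric.isOpen_singleton_iff.mp (isOpen_discrete ({0} : Set Λ))
  have hsep' : ∀ x ∈ Λ, ‖x‖ < ε → x = 0 := by
    intro x hx hlt
    have h := hsep ⟨x, hx⟩ (by simpa [Subtype.dist_eq, dist_eq_norm] using hlt)
    simpa using congrArg Subtype.val h
  -- the image of a small ball is a neighbourhood of the limit
  have hnhds : (fun x : ℂ => (x : ℂ ⧸ Λ)) '' Metric.ball l (ε / 4) ∈ nhds (l : ℂ ⧸ Λ) :=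
    (QuotientAddGroup.isOpenMap_coe).image_mem_nhds (Metric.ball_mem_nhds l (by positivity))
  have hev := hL hnhds
  obtain ⟨K, hK, hKs⟩ := mem_cocompact.mp hev
  obtain ⟨R₀, hR₀⟩ := hK.isBounded.subset_closedBall (0 : ℂ)
  obtain ⟨R, hR₀R, hR⟩ : ∃ R : ℝ, R₀ ≤ R ∧ 0 < R :=
    ⟨max R₀ 1, le_max_left _ _, lt_of_lt_of_le one_pos (le_max_right _ _)⟩
  have hnear : ∀ z : ℂ, R < ‖z‖ → ∃ x ∈ Λ, f z ∈ Metric.ball (l + x) (ε / 4) := by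
    intro z hz
    have hzK : z ∈ Kᶜ := by
      intro h
      have := hR₀ h
      rw [mem_closedBall_zero_iff] at this
      linarith
    obtain ⟨y, hy, hyz⟩ := hKs hzK
    refine ⟨-y + f z, QuotientAddGroup.eq.mp hyz, ?_⟩
    rw [Metric.mem_ball, dist_eq_norm] at hy ⊢
    convert hy using 2
    ring
  -- the exterior of a disc is connected
  have hconn : IsPreconnected {z : ℂ | R < ‖z‖} := by
    have himg : {z : ℂ | R < ‖z‖} = Complex.exp '' {w : ℂ | Real.log R < w.re} := by
      ext z
      constructor
      · intro hz
        have hz' : R < ‖z‖ := hz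
        have hz0 : z ≠ 0 := norm_pos_iff.mp (hR.trans hz')
        refine ⟨Complex.log z, ?_, Complex.exp_log hz0⟩
        simpa [Complex.log_re] using Real.log_lt_log hR hz'
      · rintro ⟨w, hw, rfl⟩
        have hw' : Real.log R < w.re := hw
        simpa [Complex.norm_exp] using (Real.log_lt_iff_lt_exp hR).mp hw'
    rw [himg]
    exact (convex_halfSpace_re_gt _).isPreconnected.image _ Complex.continuous_exp.continuousOn
  have hz₀ : R < ‖((R + 1 : ℝ) : ℂ)‖ := by
    rw [Complex.norm_real, Real.norm_of_nonneg (by linarith)]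
    linarith
  obtain ⟨x₀, hx₀, hfx₀⟩ := hnear _ hz₀
  have hsub : f '' {z : ℂ | R < ‖z‖} ⊆ Metric.ball (l + x₀) (ε / 4) := by
    refine (hconn.image f hf.continuous.continuousOn).subset_left_of_subset_union
      (v := ⋃ x ∈ {x : ℂ | x ∈ Λ ∧ x ≠ x₀}, Metric.ball (l + x) (ε / 4))
      Metric.isOpen_ball (isOpen_biUnion fun _ _ => Metric.isOpen_ball) ?_ ?_
      ⟨_, ⟨_, hz₀, rfl⟩, hfx₀⟩
    · rw [Set.disjoint_iUnion₂_right]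
      rintro x ⟨hx, hne⟩
      apply Metric.ball_disjoint_ball
      by_contra hlt
      apply hne
      apply sub_eq_zero.mp
      apply hsep' _ (Λ.sub_mem hx hx₀)
      rw [dist_add_left, dist_comm, dist_eq_norm] at hlt
      linarith
    · rintro _ ⟨z, hz, rfl⟩
      obtain ⟨x, hx, hxz⟩ := hnear z hz
      by_cases h : x = x₀
      · exact Or.inl (h ▸ hxz)
      · exact Or.inr (Set.mem_biUnion (show x ∈ {x : ℂ | x ∈ Λ ∧ x ≠ x₀} from ⟨hx, h⟩) hxz)
  -- Liouville
  apply hf.exists_const_forall_eq_of_bounded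
  refine (Metric.isBounded_ball.union
    ((isCompact_closedBall (0 : ℂ) R).image hf.continuous).isBounded).subset
    (t := Metric.ball (l + x₀) (ε / 4) ∪ f '' Metric.closedBall 0 R) ?_
  rintro _ ⟨z, rfl⟩
  rcases lt_or_ge R ‖z‖ with h | h
  · exact Or.inl (hsub ⟨z, h, rfl⟩)
  · exact Or.inr ⟨z, mem_closedBall_zero_iff.mpr h, rfl⟩
end
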